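/- arXiv:1602.00530 — 2 statements merged into one kernel-verified Lean document; each statement's English description precedes it below -/
import Mathlib

section
/- (Stability under extremum.) Let F = F(z,p,q) be continuous on Q×ℝ×ℝ, even and convex in p. Let S be a family of metric viscosity subsolutions (resp. supersolutions) of F(z,|Du|,∂ₜu)=0 in Q. Then ū(z) := sup_{v∈S} v(z) is a metric viscosity subsolution (resp. u̲(z) := inf_{v∈S} v(z) is a metric viscosity supersolution) of F(z,|Du|,∂ₜu)=0 in Q. -/
open Filter Metric Set Topology

noncomputable section

/-- A geodesic metric space: any two points are joined by a constant-speed geodesic. -/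
def IsGeodesicSpace (X : Type*) [MetricSpace X] : Prop :=
  ∀ x y : X, ∃ f : ℝ → X, f 0 = x ∧ f 1 = y ∧
    ∀ s ∈ Set.Icc (0:ℝ) 1, ∀ t ∈ Set.Icc (0:ℝ) 1,
      dist (f s) (f t) = |s - t| * dist x y

variable {X : Type*} [MetricSpace X]

/-- Upper local mslope |∇⁺v|(x) = limsup_{y→x} [v(y)-v(x)]₊ / d(y,x). -/
def mslopeUp (v : X → ℝ) (x : X) : ℝ :=
  Filter.limsup (fun y => max (v y - v x) 0 / dist y x) (𝓝[≠] x)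

/-- Lower local mslope |∇⁻v|(x) = limsup_{y→x} [v(y)-v(x)]₋ / d(y,x). -/
def mslopeDown (v : X → ℝ) (x : X) : ℝ :=
  Filter.limsup (fun y => max (v x - v y) 0 / dist y x) (𝓝[≠] x)

/-- Local mslope |∇v|(x) = limsup_{y→x} |v(y)-v(x)| / d(y,x). -/
def mslope (v : X → ℝ) (x : X) : ℝ :=
  Filter.limsup (fun y => |v y - v x| / dist y x) (𝓝[≠] x)

/-- Spatial upper local mslope of a function of time and space. -/
def slopeUpT (u : ℝ × X → ℝ) (z : ℝ × X) : ℝ := mslopeUp (fun y => u (z.1, y)) z.2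

/-- Spatial lower local mslope of a function of time and space. -/
def slopeDownT (u : ℝ × X → ℝ) (z : ℝ × X) : ℝ := mslopeDown (fun y => u (z.1, y)) z.2

/-- Spatial local mslope of a function of time and space. -/
def slopeT (u : ℝ × X → ℝ) (z : ℝ × X) : ℝ := mslope (fun y => u (z.1, y)) z.2

/-- Time derivative ∂ₜu. -/
def timeDeriv (u : ℝ × X → ℝ) (z : ℝ × X) : ℝ := deriv (fun s => u (s, z.2)) z.1

/-- Locally Lipschitz on a set. -/
def LocLipOn {α : Type*} [PseudoMetricSpace α] (s : Set α) (f : α → ℝ) : Prop :=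
  ∀ z ∈ s, ∃ K : NNReal, ∃ t ∈ 𝓝[s] z, LipschitzOnWith K f t

/-- The class 𝒞(Q): locally Lipschitz with (existing) continuous time derivative. -/
def IsCQ (Q : Set (ℝ × X)) (u : ℝ × X → ℝ) : Prop :=
  LocLipOn Q u ∧
  (∀ z ∈ Q, DifferentiableAt ℝ (fun s : ℝ => u (s, z.2)) z.1) ∧
  ContinuousOn (timeDeriv u) Q

/-- The class C̲¹(Q). -/
def IsC1UnderQ (Q : Set (ℝ × X)) (u : ℝ × X → ℝ) : Prop :=
  IsCQ Q u ∧ Set.EqOn (slopeDownT u) (slopeT u) Q ∧ ContinuousOn (slopeT u) Q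

/-- The class C̄¹(Q). -/
def IsC1UpperQ (Q : Set (ℝ × X)) (u : ℝ × X → ℝ) : Prop :=
  IsCQ Q u ∧ Set.EqOn (slopeUpT u) (slopeT u) Q ∧ ContinuousOn (slopeT u) Q

/-- The class 𝒞(U) for stationary problems: locally Lipschitz functions. -/
def IsCU (U : Set X) (v : X → ℝ) : Prop := LocLipOn U v

/-- The class C̲¹(U). -/
def IsC1UnderU (U : Set X) (v : X → ℝ) : Prop :=
  IsCU U v ∧ Set.EqOn (mslopeDown v) (mslope v) U ∧ ContinuousOn (mslope v) U

/-- The class C̄¹(U). -/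
def IsC1UpperU (U : Set X) (v : X → ℝ) : Prop :=
  IsCU U v ∧ Set.EqOn (mslopeUp v) (mslope v) U ∧ ContinuousOn (mslope v) U

/-- F_r(z,p,q) = sup_{p'∈[-1,1]} F(z,p+rp',q) if r ≥ 0, inf if r ≤ 0. -/
def Fr (F : (ℝ × X) → ℝ → ℝ → ℝ) (r : ℝ) (z : ℝ × X) (p q : ℝ) : ℝ :=
  if 0 ≤ r then sSup ((fun p' => F z (p + r * p') q) '' Set.Icc (-1:ℝ) 1)
  else sInf ((fun p' => F z (p + r * p') q) '' Set.Icc (-1:ℝ) 1)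

/-- H_r(x,p) = sup_{p'∈[-1,1]} H(x,p+rp') if r ≥ 0, inf if r ≤ 0. -/
def Hr (H : X → ℝ → ℝ) (r : ℝ) (x : X) (p : ℝ) : ℝ :=
  if 0 ≤ r then sSup ((fun p' => H x (p + r * p')) '' Set.Icc (-1:ℝ) 1)
  else sInf ((fun p' => H x (p + r * p')) '' Set.Icc (-1:ℝ) 1)

/-- Upper semicontinuous envelope (relative to a set) of an extended-real function. -/
def uscEnv {α : Type*} [TopologicalSpace α] (s : Set α) (u : α → EReal) (z : α) : EReal :=
  Filter.limsup u (𝓝[s] z)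

/-- Lower semicontinuous envelope (relative to a set) of an extended-real function. -/
def lscEnv {α : Type*} [TopologicalSpace α] (s : Set α) (u : α → EReal) (z : α) : EReal :=
  Filter.liminf u (𝓝[s] z)

/-- Upper semicontinuous envelope (relative to a set) of a real function. -/
def uscEnvR {α : Type*} [TopologicalSpace α] (s : Set α) (f : α → ℝ) (z : α) : ℝ :=
  Filter.limsup f (𝓝[s] z)

/-- Metric viscosity subsolution of F(z,|Du|,∂ₜu)=0 in Q (Gangbo–Święch). -/
def IsSubsol (Q : Set (ℝ × X)) (F : (ℝ × X) → ℝ → ℝ → ℝ) (u : ℝ × X → EReal) : Prop :=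
  ∀ ψ₁ ψ₂ : ℝ × X → ℝ, IsC1UnderQ Q ψ₁ → IsCQ Q ψ₂ → ∀ z ∈ Q,
    (∃ R > 0, uscEnv Q u z = ((ψ₁ z + ψ₂ z : ℝ) : EReal) ∧
      ∀ w ∈ Metric.ball z R ∩ Q, uscEnv Q u w ≤ ((ψ₁ w + ψ₂ w : ℝ) : EReal)) →
    Fr F (-(uscEnvR Q (slopeT ψ₂) z)) z (slopeT ψ₁ z)
      (timeDeriv (fun w => ψ₁ w + ψ₂ w) z) ≤ 0

/-- Metric viscosity supersolution of F(z,|Du|,∂ₜu)=0 in Q (Gangbo–Święch). -/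
def IsSupersol (Q : Set (ℝ × X)) (F : (ℝ × X) → ℝ → ℝ → ℝ) (u : ℝ × X → EReal) : Prop :=
  ∀ ψ₁ ψ₂ : ℝ × X → ℝ, IsC1UpperQ Q ψ₁ → IsCQ Q ψ₂ → ∀ z ∈ Q,
    (∃ R > 0, lscEnv Q u z = ((ψ₁ z + ψ₂ z : ℝ) : EReal) ∧
      ∀ w ∈ Metric.ball z R ∩ Q, ((ψ₁ w + ψ₂ w : ℝ) : EReal) ≤ lscEnv Q u w) →
    0 ≤ Fr F (uscEnvR Q (slopeT ψ₂) z) z (slopeT ψ₁ z)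
      (timeDeriv (fun w => ψ₁ w + ψ₂ w) z)

/-- Metric viscosity solution. -/
def IsSol (Q : Set (ℝ × X)) (F : (ℝ × X) → ℝ → ℝ → ℝ) (u : ℝ × X → EReal) : Prop :=
  IsSubsol Q F u ∧ IsSupersol Q F u

/-- Metric viscosity subsolution of the stationary equation H(x,|Dv|)=0 in U. -/
def IsSubsolS (U : Set X) (H : X → ℝ → ℝ) (v : X → EReal) : Prop :=
  ∀ ψ₁ ψ₂ : X → ℝ, IsC1UnderU U ψ₁ → IsCU U ψ₂ → ∀ x ∈ U,
    (∃ R > 0, uscEnv U v x = ((ψ₁ x + ψ₂ x : ℝ) : EReal) ∧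
      ∀ w ∈ Metric.ball x R ∩ U, uscEnv U v w ≤ ((ψ₁ w + ψ₂ w : ℝ) : EReal)) →
    Hr H (-(uscEnvR U (mslope ψ₂) x)) x (mslope ψ₁ x) ≤ 0

/-- Metric viscosity supersolution of the stationary equation H(x,|Dv|)=0 in U. -/
def IsSupersolS (U : Set X) (H : X → ℝ → ℝ) (v : X → EReal) : Prop :=
  ∀ ψ₁ ψ₂ : X → ℝ, IsC1UpperU U ψ₁ → IsCU U ψ₂ → ∀ x ∈ U,
    (∃ R > 0, lscEnv U v x = ((ψ₁ x + ψ₂ x : ℝ) : EReal) ∧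
      ∀ w ∈ Metric.ball x R ∩ U, ((ψ₁ w + ψ₂ w : ℝ) : EReal) ≤ lscEnv U v w) →
    0 ≤ Hr H (uscEnvR U (mslope ψ₂) x) x (mslope ψ₁ x)

/-- Metric viscosity solution of the stationary equation. -/
def IsSolS (U : Set X) (H : X → ℝ → ℝ) (v : X → EReal) : Prop :=
  IsSubsolS U H v ∧ IsSupersolS U H v

/-! Let `ψ` touch the envelope of the supremum from above at `z₀`. Near `z₀` some member `v` of the
family comes within `r² / 2` of `ψ`, so on the closed ball of radius `r` about `z₀` the function
`ψ + sqDist z₀ - v*` is nonnegative, and at some point it is less than `r²`. As `X` need not be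
locally compact, this function need not attain its minimum; but the ball is the product of a compact
time interval and a complete ball of `X`, so Ekeland's principle in the space variable makes the
minimum attained up to an error `ε d(·, x₁)`. The minimum value is less than `r²`, hence the
minimizer lies inside the ball, and there `v*` is touched by `ψ` plus `sqDist z₀ + ε d(·, x₁)` and
a constant. This perturbation goes into `ψ₂`, where it costs slope `2r + ε`. If the
inequality for the supremum failed at `z₀`, continuity of `F` would make it fail for `v` as well
once `r` and `ε` are small. Supersolutions of `F(z, p, q)` are the negatives of subsolutions of
`-F(z, p, -q)`. -/

section Ekeland

open scoped ENNReal

variable {α : Type*}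

/-- The set of points that `x` reaches in Ekeland's order: those where `f` has dropped from `f x`
by at least `ε` times the distance travelled. -/
def ekelandSet [PseudoEMetricSpace α] (f : α → ℝ≥0∞) (ε : ℝ≥0∞) (x : α) : Set α :=
  {y | f y + ε * edist x y ≤ f x}

section PseudoEMetricSpace

variable [PseudoEMetricSpace α] {f : α → ℝ≥0∞} {ε : ℝ≥0∞} {x y z : α}

theorem self_mem_ekelandSet (f : α → ℝ≥0∞) (ε : ℝ≥0∞) (x : α) : x ∈ ekelandSet f ε x := by
  simp [ekelandSet]

theorem ekelandSet_trans (hy : y ∈ ekelandSet f ε x) (hz : z ∈ ekelandSet f ε y) :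
    z ∈ ekelandSet f ε x :=
  calc
    f z + ε * edist x z ≤ f z + ε * (edist x y + edist y z) := by grw [edist_triangle x y z]
    _ = f z + ε * edist y z + ε * edist x y := by ring
    _ ≤ f y + ε * edist x y := by grw [show f z + ε * edist y z ≤ f y from hz]
    _ ≤ f x := hy

theorem isClosed_ekelandSet (hf : LowerSemicontinuous f) (hε : ε ≠ ∞) (x : α) :
    IsClosed (ekelandSet f ε x) :=
  (hf.add (ENNReal.continuous_const_mul hε |>.comp
    (continuous_const.edist continuous_id)).lowerSemicontinuous).isClosed_preimage _

theorem exists_mem_ekelandSet_edist_le (hε₀ : ε ≠ 0) (hε : ε ≠ ∞) (hx : f x ≠ ∞) {δ : ℝ≥0∞}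
    (hδ : δ ≠ 0) :
    ∃ y ∈ ekelandSet f ε x, ∀ z ∈ ekelandSet f ε y, edist y z ≤ δ := by
  have hle : ∀ {y z}, z ∈ ekelandSet f ε y → f z ≤ f y := fun h => le_self_add.trans h
  have hlt : ⨅ y ∈ ekelandSet f ε x, f y < (⨅ y ∈ ekelandSet f ε x, f y) + ε * δ :=
    ENNReal.lt_add_right
      (ne_top_of_le_ne_top hx (iInf₂_le x (self_mem_ekelandSet f ε x))) (mul_ne_zero hε₀ hδ)
  obtain ⟨y, hy, hfy⟩ := by simpa only [iInf_lt_iff, exists_prop] using hlt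
  refine ⟨y, hy, fun z hz => (ENNReal.mul_le_mul_iff_right hε₀ hε).1 ?_⟩
  refine (ENNReal.add_le_add_iff_left (ne_top_of_le_ne_top hx ((hle hz).trans (hle hy)))).1 ?_
  calc
    f z + ε * edist y z ≤ f y := hz
    _ ≤ (⨅ y ∈ ekelandSet f ε x, f y) + ε * δ := hfy.le
    _ ≤ f z + ε * δ := by grw [iInf₂_le z (ekelandSet_trans hy hz)]

end PseudoEMetricSpace

/-- **Ekeland's variational principle**. -/
theorem exists_forall_lt_add_mul_edist [EMetricSpace α] [CompleteSpace α] {f : α → ℝ≥0∞}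
    (hf : LowerSemicontinuous f) {ε : ℝ≥0∞} (hε₀ : ε ≠ 0) (hε : ε ≠ ∞) {x₀ : α} (hx₀ : f x₀ ≠ ∞) :
    ∃ x, f x + ε * edist x₀ x ≤ f x₀ ∧ ∀ y ≠ x, f x < f y + ε * edist x y := by
  have hnext : ∀ (n : ℕ) (x : {x // f x ≠ ∞}), ∃ y : {x // f x ≠ ∞},
      y.1 ∈ ekelandSet f ε x ∧ ∀ z ∈ ekelandSet f ε y, edist y.1 z ≤ 2⁻¹ ^ n := by
    rintro n ⟨x, hx⟩
    obtain ⟨y, hy, hδ⟩ := exists_mem_ekelandSet_edist_le hε₀ hε hx (δ := 2⁻¹ ^ n) (by simp)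
    exact ⟨⟨y, ne_top_of_le_ne_top hx (le_self_add.trans hy)⟩, hy, hδ⟩
  choose next hnext_mem hnext_edist using hnext
  let s : ℕ → {x // f x ≠ ∞} := fun n => Nat.rec ⟨x₀, hx₀⟩ next n
  have hmem : ∀ {n m}, n ≤ m → (s m).1 ∈ ekelandSet f ε (s n).1 := fun {n m} hnm => by
    induction m, hnm using Nat.le_induction with
    | base => exact self_mem_ekelandSet f ε _
    | succ m _ ih => exact ekelandSet_trans ih (hnext_mem m (s m))
  have hs : ∀ n, ∀ z ∈ ekelandSet f ε (s (n + 1)).1, edist (s (n + 1)).1 z ≤ 2⁻¹ ^ n :=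
    fun n => hnext_edist n (s n)
  have hlim : ∀ z, (∀ n, z ∈ ekelandSet f ε (s n).1) →
      Tendsto (fun n => (s (n + 1)).1) atTop (𝓝 z) :=
    fun z hz => tendsto_iff_edist_tendsto_0.2 <| tendsto_of_tendsto_of_tendsto_of_le_of_le
      tendsto_const_nhds (ENNReal.tendsto_pow_atTop_nhds_zero_of_lt_one (by simp))
      (fun _ => zero_le) fun n => hs n z (hz (n + 1))
  obtain ⟨x, hx⟩ : ∃ x, Tendsto (fun n => (s (n + 1)).1) atTop (𝓝 x) :=
    cauchySeq_tendsto_of_complete <| cauchySeq_of_edist_le_geometric 2⁻¹ 1 (by simp) (by simp)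
      fun n => by simpa using hs n _ (hmem (Nat.le_succ _))
  have hx_mem : ∀ n, x ∈ ekelandSet f ε (s n).1 := fun n =>
    (isClosed_ekelandSet hf hε _).mem_of_tendsto hx <|
      (eventually_ge_atTop n).mono fun m hm => hmem (hm.trans (Nat.le_succ m))
  refine ⟨x, hx_mem 0, fun y hyx => lt_of_not_ge fun hy => hyx ?_⟩
  exact tendsto_nhds_unique (hlim y fun n => ekelandSet_trans (hx_mem n) hy) hx

theorem exists_eq_iInf_of_compactSpace [TopologicalSpace α] [CompactSpace α] [Nonempty α]
    {f : α → ℝ≥0∞} (hf : LowerSemicontinuous f) : ∃ x, f x = ⨅ y, f y := by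
  obtain ⟨x, -, hx⟩ :=
    (hf.lowerSemicontinuousOn univ).exists_isMinOn univ_nonempty isCompact_univ
  exact ⟨x, le_antisymm (le_iInf fun y => hx (mem_univ y)) (iInf_le f x)⟩

theorem lowerSemicontinuous_iInf_fst {T Y : Type*} [TopologicalSpace T] [CompactSpace T]
    [TopologicalSpace Y] {f : T × Y → ℝ≥0∞} (hf : LowerSemicontinuous f) :
    LowerSemicontinuous fun y => ⨅ t, f (t, y) := by
  rcases isEmpty_or_nonempty T with hT | hT
  · simpa only [iInf_of_empty] using lowerSemicontinuous_const
  refine lowerSemicontinuous_iff_isClosed_preimage.2 fun c => ?_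
  convert isClosedMap_snd_of_compactSpace _ (hf.isClosed_preimage c) using 1
  ext y
  obtain ⟨t, ht⟩ := exists_eq_iInf_of_compactSpace (hf.comp (Continuous.prodMk_left y))
  constructor
  · exact fun hy => ⟨(t, y), ht.trans_le hy, rfl⟩
  · rintro ⟨⟨t', _⟩, ht', rfl⟩
    exact (iInf_le (fun t => f (t, _)) t').trans ht'

/- Only displacements in `Y` are penalised, since a penalty `|t - s|` would not be differentiable
in time. Minimizing over the compact factor first makes this Ekeland's principle for the partial
minimum. -/
theorem exists_forall_le_add_mul_edist_snd {T Y : Type*} [TopologicalSpace T] [CompactSpace T]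
    [EMetricSpace Y] [CompleteSpace Y] {f : T × Y → ℝ≥0∞} (hf : LowerSemicontinuous f)
    {ε : ℝ≥0∞} (hε₀ : ε ≠ 0) (hε : ε ≠ ∞) {z₀ : T × Y} (hz₀ : f z₀ ≠ ∞) :
    ∃ z, f z ≤ f z₀ ∧ ∀ w, f z ≤ f w + ε * edist z.2 w.2 := by
  have : Nonempty T := ⟨z₀.1⟩
  obtain ⟨y, hy₀, hy⟩ := exists_forall_lt_add_mul_edist (lowerSemicontinuous_iInf_fst hf) hε₀ hε
    (ne_top_of_le_ne_top hz₀ (iInf_le _ z₀.1))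
  obtain ⟨t, ht⟩ := exists_eq_iInf_of_compactSpace (hf.comp (Continuous.prodMk_left y))
  have hty : f (t, y) = ⨅ t, f (t, y) := ht
  refine ⟨(t, y), ?_, fun w => ?_⟩
  · exact hty.trans_le ((le_self_add.trans hy₀).trans (iInf_le _ z₀.1))
  calc
    f (t, y) ≤ (⨅ t, f (t, w.2)) + ε * edist y w.2 := by
      rw [hty]
      rcases eq_or_ne w.2 y with rfl | hne
      exacts [le_self_add, (hy _ hne).le]
    _ ≤ f w + ε * edist y w.2 := by grw [iInf_le _ w.1]

theorem exists_forall_mem_prod_le_add_mul_edist_snd {T Y : Type*} [TopologicalSpace T]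
    [EMetricSpace Y] {I : Set T} {B : Set Y} (hI : IsCompact I) (hB : IsComplete B)
    {f : T × Y → ℝ≥0∞} (hf : LowerSemicontinuousOn f (I ×ˢ B)) {ε : ℝ≥0∞}
    (hε₀ : ε ≠ 0) (hε : ε ≠ ∞) {z₀ : T × Y} (hz₀ : z₀ ∈ I ×ˢ B) (hfz₀ : f z₀ ≠ ∞) :
    ∃ z ∈ I ×ˢ B, f z ≤ f z₀ ∧ ∀ w ∈ I ×ˢ B, f z ≤ f w + ε * edist z.2 w.2 := by
  have : CompactSpace I := isCompact_iff_compactSpace.1 hI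
  have : CompleteSpace B := completeSpace_coe_iff_isComplete.2 hB
  have hg : LowerSemicontinuous fun z : I × B => f (z.1, z.2) :=
    LowerSemicontinuous.comp (lowerSemicontinuous_restrict_iff.2 hf)
      (g := fun z : I × B => (⟨(z.1, z.2), z.1.2, z.2.2⟩ : ↥(I ×ˢ B))) (by fun_prop)
  obtain ⟨z, hz, hzw⟩ := exists_forall_le_add_mul_edist_snd hg hε₀ hε
    (z₀ := (⟨z₀.1, hz₀.1⟩, ⟨z₀.2, hz₀.2⟩)) hfz₀
  exact ⟨(z.1, z.2), ⟨z.1.2, z.2.2⟩, hz, fun w hw => hzw (⟨w.1, hw.1⟩, ⟨w.2, hw.2⟩)⟩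

end Ekeland

section Limsup

variable {α : Type*}

theorem limsup_nonneg_of_nonneg {f : Filter α} {u : α → ℝ} (hu : ∀ a, 0 ≤ u a) :
    0 ≤ limsup u f := by
  rcases f.eq_or_neBot with rfl | hf
  · simp [limsup, limsSup]
  · refine Real.sInf_nonneg fun a ha => ?_
    obtain ⟨x, hx⟩ := (eventually_map.1 ha).exists
    exact (hu x).trans hx

theorem limsup_le_of_nonneg_of_eventually_le {f : Filter α} {u : α → ℝ} {C : ℝ}
    (hu : ∀ a, 0 ≤ u a) (hC : 0 ≤ C) (h : ∀ᶠ a in f, u a ≤ C) : limsup u f ≤ C := by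
  rcases f.eq_or_neBot with rfl | hf
  · simpa [limsup, limsSup] using hC
  · exact limsup_le_of_le (isCoboundedUnder_le_of_le f hu) h

variable [TopologicalSpace α] {s : Set α}

theorem le_uscEnv (u : α → EReal) {z : α} (hz : z ∈ s) : u z ≤ uscEnv s u z :=
  le_limsup_of_frequently_le' fun h => (mem_of_mem_nhdsWithin hz h) le_rfl

theorem uscEnv_mono {u v : α → EReal} (h : u ≤ v) : uscEnv s u ≤ uscEnv s v :=
  fun _ => limsup_le_limsup (Eventually.of_forall h)

theorem upperSemicontinuous_uscEnv (s : Set α) (u : α → EReal) :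
    UpperSemicontinuous (uscEnv s u) := fun z a ha => by
  obtain ⟨b, hb, hba⟩ := exists_between ha
  filter_upwards [eventually_nhds_nhdsWithin.2 (eventually_lt_of_limsup_lt hb)] with w hw
  exact (limsup_le_of_le (h := hw.mono fun _ => le_of_lt)).trans_lt hba

theorem uscEnv_neg (s : Set α) (u : α → EReal) : uscEnv s (-u) = -lscEnv s u :=
  funext fun _ => EReal.limsup_neg

end Limsup

section Slope

variable {Q : Set (ℝ × X)} {u v : ℝ × X → ℝ} {z : ℝ × X}

theorem slopeT_nonneg (u : ℝ × X → ℝ) (z : ℝ × X) : 0 ≤ slopeT u z :=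
  limsup_nonneg_of_nonneg fun _ => by positivity

theorem uscEnvR_slopeT_nonneg (Q : Set (ℝ × X)) (u : ℝ × X → ℝ) (z : ℝ × X) :
    0 ≤ uscEnvR Q (slopeT u) z :=
  limsup_nonneg_of_nonneg (slopeT_nonneg u)

theorem LocLipOn.exists_eventually_quotient_le (hQ : IsOpen Q) (hu : LocLipOn Q u) (hz : z ∈ Q) :
    ∃ K : NNReal, ∀ᶠ w in 𝓝 z, ∀ᶠ y in 𝓝[≠] w.2, |u (w.1, y) - u w| / dist y w.2 ≤ K := by
  obtain ⟨K, t, ht, hK⟩ := hu z hz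
  rw [hQ.nhdsWithin_eq hz] at ht
  refine ⟨K, ?_⟩
  filter_upwards [eventually_mem_nhds_iff.2 ht] with w hw
  have hcont : Tendsto (fun y : X => (w.1, y)) (𝓝[≠] w.2) (𝓝 w) :=
    (Continuous.prodMk_right w.1).continuousAt.tendsto.mono_left nhdsWithin_le_nhds
  filter_upwards [hcont hw] with y hy
  refine div_le_of_le_mul₀ dist_nonneg K.2 ?_
  simpa [Real.dist_eq, Prod.dist_eq] using hK.dist_le_mul _ hy _ (mem_of_mem_nhds hw)

theorem slopeT_add_le (hQ : IsOpen Q) (hu : LocLipOn Q u) (hv : LocLipOn Q v) (hz : z ∈ Q) :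
    slopeT (u + v) z ≤ slopeT u z + slopeT v z := by
  obtain ⟨K, hK⟩ := hu.exists_eventually_quotient_le hQ hz
  obtain ⟨L, hL⟩ := hv.exists_eventually_quotient_le hQ hz
  have hK : ∀ᶠ y in 𝓝[≠] z.2, |u (z.1, y) - u z| / dist y z.2 ≤ K := hK.self_of_nhds
  have hL : ∀ᶠ y in 𝓝[≠] z.2, |v (z.1, y) - v z| / dist y z.2 ≤ L := hL.self_of_nhds
  rcases (𝓝[≠] z.2).eq_or_neBot with hbot | hne
  · simp [slopeT, mslope, hbot, limsup, limsSup]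
  have hbelow (w : ℝ × X → ℝ) : ∀ y, 0 ≤ |w (z.1, y) - w z| / dist y z.2 := fun _ => by positivity
  refine (limsup_le_limsup (Eventually.of_forall fun y => ?_) ?_ ?_).trans
    (limsup_add_le (isBoundedUnder_of ⟨0, hbelow u⟩) (isBoundedUnder_of_eventually_le hK)
      (isCoboundedUnder_le_of_le _ (hbelow v)) (isBoundedUnder_of_eventually_le hL))
  · simp only [Pi.add_apply, ← add_div]
    gcongr
    rw [add_sub_add_comm]
    exact abs_add_le _ _
  · exact isCoboundedUnder_le_of_le _ (hbelow (u + v))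
  · exact isBoundedUnder_le_add (isBoundedUnder_of_eventually_le hK)
      (isBoundedUnder_of_eventually_le hL)

theorem LocLipOn.eventually_slopeT_lt (hQ : IsOpen Q) (hu : LocLipOn Q u) (hz : z ∈ Q) {C : ℝ}
    (hC : uscEnvR Q (slopeT u) z < C) : ∀ᶠ w in 𝓝 z, slopeT u w < C := by
  obtain ⟨K, hK⟩ := hu.exists_eventually_quotient_le hQ hz
  rw [uscEnvR, hQ.nhdsWithin_eq hz] at hC
  refine eventually_lt_of_limsup_lt hC ⟨K, eventually_map.2 (hK.mono fun w hw => ?_)⟩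
  exact limsup_le_of_nonneg_of_eventually_le (fun _ => by positivity) K.2 hw

end Slope

section TestFunctions

variable {Q : Set (ℝ × X)} {u v : ℝ × X → ℝ} {z : ℝ × X}

theorem IsCQ.add (hu : IsCQ Q u) (hv : IsCQ Q v) : IsCQ Q (u + v) :=
  ⟨LocallyLipschitzOn.add hu.1 hv.1, fun z hz => (hu.2.1 z hz).add (hv.2.1 z hz),
    (hu.2.2.add hv.2.2).congr fun z hz => deriv_add (hu.2.1 z hz) (hv.2.1 z hz)⟩

theorem IsCQ.timeDeriv_add (hu : IsCQ Q u) (hv : IsCQ Q v) (hz : z ∈ Q) :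
    timeDeriv (u + v) z = timeDeriv u z + timeDeriv v z :=
  deriv_add (hu.2.1 z hz) (hv.2.1 z hz)

theorem timeDeriv_neg {Y : Type*} (u : ℝ × Y → ℝ) : timeDeriv (-u) = -timeDeriv u :=
  funext fun _ => deriv.fun_neg

theorem slopeT_neg (u : ℝ × X → ℝ) : slopeT (-u) = slopeT u := by
  funext z
  simp only [slopeT, mslope, Pi.neg_apply, neg_sub_neg, abs_sub_comm]

theorem slopeDownT_neg (u : ℝ × X → ℝ) : slopeDownT (-u) = slopeUpT u := by
  funext z
  simp only [slopeDownT, slopeUpT, mslopeDown, mslopeUp, Pi.neg_apply, neg_sub_neg]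

theorem IsCQ.neg (hu : IsCQ Q u) : IsCQ Q (-u) :=
  ⟨LocallyLipschitzOn.neg hu.1, fun z hz => (hu.2.1 z hz).neg,
    by simpa only [timeDeriv_neg] using hu.2.2.neg⟩

theorem isCQ_neg_iff : IsCQ Q (-u) ↔ IsCQ Q u :=
  ⟨fun h => neg_neg u ▸ h.neg, IsCQ.neg⟩

theorem isC1UnderQ_neg_iff : IsC1UnderQ Q (-u) ↔ IsC1UpperQ Q u := by
  rw [IsC1UnderQ, IsC1UpperQ, isCQ_neg_iff, slopeDownT_neg, slopeT_neg]

/-- The square `(t - t₀)² + d(x, x₀)²` of the Euclidean product distance from `z₀ = (t₀, x₀)`,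
which, unlike the distance `max |t - t₀| d(x, x₀)` of `ℝ × X`, is differentiable in time. -/
def sqDist (z₀ z : ℝ × X) : ℝ :=
  (z.1 - z₀.1) ^ 2 + dist z.2 z₀.2 ^ 2

theorem sqDist_nonneg (z₀ z : ℝ × X) : 0 ≤ sqDist z₀ z := by
  unfold sqDist
  positivity

@[fun_prop]
theorem continuous_sqDist (z₀ : ℝ × X) : Continuous (sqDist z₀) := by
  unfold sqDist
  fun_prop

theorem mem_ball_of_sqDist_lt {z₀ z : ℝ × X} {r : ℝ} (hr : 0 ≤ r) (h : sqDist z₀ z < r ^ 2) :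
    z ∈ ball z₀ r := by
  rw [sqDist] at h
  rw [mem_ball, Prod.dist_eq, max_lt_iff, Real.dist_eq]
  exact ⟨abs_lt_of_sq_lt_sq (by linarith [sq_nonneg (dist z.2 z₀.2)]) hr,
    lt_of_pow_lt_pow_left₀ 2 hr (by linarith [sq_nonneg (z.1 - z₀.1)])⟩

/-- The perturbation of a test function touching at `z₀`: its quadratic part makes the touching
strict, and `ε d(·, x₁)` is the error term of Ekeland's principle. -/
def quadPert (z₀ : ℝ × X) (ε : ℝ) (x₁ : X) (c : ℝ) (z : ℝ × X) : ℝ :=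
  sqDist z₀ z + ε * dist z.2 x₁ + c

variable {z₀ : ℝ × X} {ε : ℝ} {x₁ : X} {c : ℝ}

theorem hasDerivAt_quadPert (z₀ : ℝ × X) (ε : ℝ) (x₁ : X) (c : ℝ) (z : ℝ × X) :
    HasDerivAt (fun s => quadPert z₀ ε x₁ c (s, z.2)) (2 * (z.1 - z₀.1)) z.1 := by
  simpa [quadPert, sqDist, add_assoc] using
    (((hasDerivAt_id z.1).sub_const z₀.1).fun_pow 2).add_const
      (dist z.2 z₀.2 ^ 2 + ε * dist z.2 x₁ + c)

theorem timeDeriv_quadPert (z₀ : ℝ × X) (ε : ℝ) (x₁ : X) (c : ℝ) (z : ℝ × X) :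
    timeDeriv (quadPert z₀ ε x₁ c) z = 2 * (z.1 - z₀.1) :=
  (hasDerivAt_quadPert z₀ ε x₁ c z).deriv

theorem locallyLipschitz_quadPert (z₀ : ℝ × X) (ε : ℝ) (x₁ : X) (c : ℝ) :
    LocallyLipschitz (quadPert z₀ ε x₁ c) := by
  have hpoly : LocallyLipschitz fun a : ℝ × ℝ × ℝ => a.1 ^ 2 + a.2.1 ^ 2 + ε * a.2.2 + c :=
    ContDiff.locallyLipschitz (𝕂 := ℝ) (by fun_prop)
  have hdist (y : X) : LocallyLipschitz fun z : ℝ × X => dist z.2 y :=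
    ((LipschitzWith.dist_left y).comp LipschitzWith.prod_snd).locallyLipschitz
  have hfst : LocallyLipschitz fun z : ℝ × X => z.1 - z₀.1 :=
    LipschitzWith.prod_fst.locallyLipschitz.sub (.const _)
  have hcomp := hpoly.comp (hfst.prodMk ((hdist z₀.2).prodMk (hdist x₁)))
  exact hcomp

theorem isCQ_quadPert (Q : Set (ℝ × X)) (z₀ : ℝ × X) (ε : ℝ) (x₁ : X) (c : ℝ) :
    IsCQ Q (quadPert z₀ ε x₁ c) := by
  refine ⟨(locallyLipschitz_quadPert z₀ ε x₁ c).locallyLipschitzOn,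
    fun z _ => (hasDerivAt_quadPert z₀ ε x₁ c z).differentiableAt, ?_⟩
  rw [funext (timeDeriv_quadPert z₀ ε x₁ c)]
  fun_prop

theorem abs_quadPert_sub_le (hε : 0 ≤ ε) (t : ℝ) (x y : X) :
    |quadPert z₀ ε x₁ c (t, y) - quadPert z₀ ε x₁ c (t, x)| ≤
      (dist y z₀.2 + dist x z₀.2 + ε) * dist y x :=
  calc
    _ = |(dist y z₀.2 + dist x z₀.2) * (dist y z₀.2 - dist x z₀.2)
          + ε * (dist y x₁ - dist x x₁)| := by
      simp only [quadPert, sqDist]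
      ring_nf
    _ ≤ (dist y z₀.2 + dist x z₀.2) * |dist y z₀.2 - dist x z₀.2|
          + ε * |dist y x₁ - dist x x₁| := by
      grw [abs_add_le, abs_mul, abs_mul, abs_of_nonneg hε, abs_of_nonneg (by positivity)]
    _ ≤ (dist y z₀.2 + dist x z₀.2) * dist y x + ε * dist y x := by
      grw [abs_dist_sub_le, abs_dist_sub_le]
    _ = (dist y z₀.2 + dist x z₀.2 + ε) * dist y x := by ring

theorem slopeT_quadPert_le_of_dist_lt (hε : 0 ≤ ε) {r : ℝ} (hr : dist z.2 z₀.2 < r) :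
    slopeT (quadPert z₀ ε x₁ c) z ≤ 2 * r + ε := by
  have hC : 0 ≤ 2 * r + ε := by linarith [dist_nonneg (x := z.2) (y := z₀.2)]
  refine limsup_le_of_nonneg_of_eventually_le (fun _ => by positivity) hC ?_
  filter_upwards [mem_nhdsWithin_of_mem_nhds (isOpen_ball.mem_nhds hr)] with y hy
  refine div_le_of_le_mul₀ dist_nonneg hC ((abs_quadPert_sub_le hε z.1 z.2 y).trans ?_)
  gcongr
  linarith [mem_ball.1 hy]

theorem eventually_uscEnvR_slopeT_add_quadPert_le (hQ : IsOpen Q) (hu : LocLipOn Q u)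
    (hz₀ : z₀ ∈ Q) (hε : 0 < ε) :
    ∀ᶠ w in 𝓝 z₀, ∀ x₁ c,
      uscEnvR Q (slopeT (u + quadPert z₀ ε x₁ c)) w ≤ uscEnvR Q (slopeT u) z₀ + 4 * ε := by
  have hM := uscEnvR_slopeT_nonneg Q u z₀
  filter_upwards [((hu.eventually_slopeT_lt hQ hz₀ (lt_add_of_pos_right _ hε)).and
    ((hQ.eventually_mem hz₀).and (ball_mem_nhds z₀ hε))).eventually_nhds] with w hw x₁ c
  refine limsup_le_of_nonneg_of_eventually_le (slopeT_nonneg _) (by positivity)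
    ((hw.filter_mono nhdsWithin_le_nhds).mono ?_)
  rintro y ⟨hyu, hyQ, hyε⟩
  have hpert := slopeT_quadPert_le_of_dist_lt (x₁ := x₁) (c := c) hε.le
    ((le_max_right _ _).trans_lt (mem_ball.1 hyε))
  have hadd := slopeT_add_le hQ hu (isCQ_quadPert Q z₀ ε x₁ c).1 hyQ
  linarith

end TestFunctions

section Hamiltonian

section Fr

variable {Y : Type*} {F : (ℝ × Y) → ℝ → ℝ → ℝ} {r : ℝ} {z : ℝ × Y} {p q : ℝ}

theorem Fr_eq_sSup (hr : 0 ≤ r) :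
    Fr F r z p q = sSup ((fun s => F z (p + s) q) '' Icc (-r) r) := by
  have himage : (r * ·) '' Icc (-1) 1 = Icc (-r) r := by simp [image_mul_left_Icc hr]
  rw [Fr, if_pos hr, ← himage, image_image]

theorem Fr_neg_eq_sInf (hr : 0 ≤ r) :
    Fr F (-r) z p q = sInf ((fun s => F z (p + s) q) '' Icc (-r) r) := by
  rcases hr.eq_or_lt with rfl | hr
  · simp [Fr]
  have himage : (-r * ·) '' Icc (-1) 1 = Icc (-r) r := by
    calc
      (-r * ·) '' Icc (-1) 1 = (r * ·) '' (Neg.neg '' Icc (-1) 1) := by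
        rw [image_image]
        simp only [mul_neg, neg_mul]
      _ = Icc (-r) r := by simp [image_mul_left_Icc hr.le]
  rw [Fr, if_neg (by linarith), ← himage, image_image]

theorem Fr_nonneg_iff (hr : 0 ≤ r) (hF : Continuous fun p => F z p q) :
    0 ≤ Fr F r z p q ↔ ∃ s ∈ Icc (-r) r, 0 ≤ F z (p + s) q := by
  have hcont : ContinuousOn (fun s => F z (p + s) q) (Icc (-r) r) :=
    (hF.comp (continuous_const_add p)).continuousOn
  rw [Fr_eq_sSup hr, ← not_lt,
    isCompact_Icc.sSup_lt_iff_of_continuous (nonempty_Icc.2 (neg_le_self hr)) hcont]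
  simp only [not_forall, not_lt, exists_prop]

theorem Fr_neg_nonpos_iff (hr : 0 ≤ r) (hF : Continuous fun p => F z p q) :
    Fr F (-r) z p q ≤ 0 ↔ ∃ s ∈ Icc (-r) r, F z (p + s) q ≤ 0 := by
  have hcont : ContinuousOn (fun s => F z (p + s) q) (Icc (-r) r) :=
    (hF.comp (continuous_const_add p)).continuousOn
  rw [Fr_neg_eq_sInf hr, ← not_lt,
    isCompact_Icc.lt_sInf_iff_of_continuous (nonempty_Icc.2 (neg_le_self hr)) hcont]
  simp only [not_forall, not_lt, exists_prop]

end Fr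

theorem exists_gt_eventually_forall_mem_Icc_pos {E : Type*} [TopologicalSpace E] {G : E × ℝ → ℝ}
    {y : E} {r : ℝ} (hr : 0 ≤ r) (hG : ∀ s ∈ Icc (-r) r, ContinuousAt G (y, s))
    (hpos : ∀ s ∈ Icc (-r) r, 0 < G (y, s)) :
    ∃ r' > r, ∀ᶠ w in 𝓝 y, ∀ s ∈ Icc (-r') r', 0 < G (w, s) := by
  have hscaled : ∀ᶠ a : ℝ × E in 𝓝 (r, y), ∀ θ ∈ Icc (-1 : ℝ) 1, 0 < G (a.2, a.1 * θ) := by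
    refine isCompact_Icc.eventually_forall_of_forall_eventually fun θ hθ => ?_
    have hrθ : r * θ ∈ Icc (-r) r := by
      simpa [image_mul_left_Icc hr] using mem_image_of_mem (r * ·) hθ
    have hscale : Tendsto (fun a : (ℝ × E) × ℝ => (a.1.2, a.1.1 * a.2)) (𝓝 ((r, y), θ))
        (𝓝 (y, r * θ)) := Continuous.tendsto (by fun_prop) ((r, y), θ)
    exact hscale.eventually ((hG _ hrθ).eventually_const_lt (hpos _ hrθ))
  obtain ⟨r', hr', hrr'⟩ := ((hscaled.curry_nhds.filter_mono nhdsWithin_le_nhds).and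
    (self_mem_nhdsWithin (s := Ioi r))).exists
  refine ⟨r', hrr', hr'.mono fun w hw s hs => ?_⟩
  have hs_image : s ∈ (r' * ·) '' Icc (-1) 1 := by
    simpa [image_mul_left_Icc (hr.trans (le_of_lt hrr'))] using hs
  obtain ⟨θ, hθ, rfl⟩ := hs_image
  exact hw θ hθ

end Hamiltonian

section Touching

/-- The upper semicontinuous envelope of `u` is touched from above by `ψ` at `z`, that is,
`u* - ψ` has a zero local maximum there. -/
def TouchesAbove (Q : Set (ℝ × X)) (u : ℝ × X → EReal) (ψ : ℝ × X → ℝ) (z : ℝ × X) : Prop :=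
  uscEnv Q u z = ψ z ∧ ∀ᶠ w in 𝓝[Q] z, uscEnv Q u w ≤ ψ w

/-- The lower semicontinuous envelope of `u` is touched from below by `ψ` at `z`, that is,
`u_* - ψ` has a zero local minimum there. -/
def TouchesBelow (Q : Set (ℝ × X)) (u : ℝ × X → EReal) (ψ : ℝ × X → ℝ) (z : ℝ × X) : Prop :=
  lscEnv Q u z = ψ z ∧ ∀ᶠ w in 𝓝[Q] z, ψ w ≤ lscEnv Q u w

variable {Q : Set (ℝ × X)} {F : (ℝ × X) → ℝ → ℝ → ℝ} {u : ℝ × X → EReal} {ψ : ℝ × X → ℝ}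
  {z : ℝ × X}

theorem touchesAbove_neg_iff : TouchesAbove Q (-u) (-ψ) z ↔ TouchesBelow Q u ψ z := by
  simp only [TouchesAbove, TouchesBelow, uscEnv_neg, Pi.neg_apply, EReal.coe_neg, neg_inj,
    EReal.neg_le_neg_iff]

theorem touchesAbove_iff : TouchesAbove Q u ψ z ↔
    ∃ R > 0, uscEnv Q u z = ψ z ∧ ∀ w ∈ ball z R ∩ Q, uscEnv Q u w ≤ ψ w :=
  ⟨fun ⟨h, hm⟩ => let ⟨R, hR, hb⟩ := mem_nhdsWithin_iff.1 hm; ⟨R, hR, h, hb⟩,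
    fun ⟨R, hR, h, hb⟩ => ⟨h, mem_nhdsWithin_iff.2 ⟨R, hR, hb⟩⟩⟩

theorem touchesBelow_iff : TouchesBelow Q u ψ z ↔
    ∃ R > 0, lscEnv Q u z = ψ z ∧ ∀ w ∈ ball z R ∩ Q, ψ w ≤ lscEnv Q u w :=
  ⟨fun ⟨h, hm⟩ => let ⟨R, hR, hb⟩ := mem_nhdsWithin_iff.1 hm; ⟨R, hR, h, hb⟩,
    fun ⟨R, hR, h, hb⟩ => ⟨h, mem_nhdsWithin_iff.2 ⟨R, hR, hb⟩⟩⟩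

theorem isSubsol_iff (hF : ∀ z ∈ Q, ∀ q, Continuous fun p => F z p q) :
    IsSubsol Q F u ↔ ∀ ψ₁ ψ₂, IsC1UnderQ Q ψ₁ → IsCQ Q ψ₂ → ∀ z ∈ Q,
      TouchesAbove Q u (ψ₁ + ψ₂) z →
      ∃ s ∈ Icc (-uscEnvR Q (slopeT ψ₂) z) (uscEnvR Q (slopeT ψ₂) z),
        F z (slopeT ψ₁ z + s) (timeDeriv (ψ₁ + ψ₂) z) ≤ 0 := by
  refine forall₄_congr fun ψ₁ ψ₂ _ _ => forall₂_congr fun z hz => ?_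
  rw [Fr_neg_nonpos_iff (uscEnvR_slopeT_nonneg Q ψ₂ z) (hF z hz _), touchesAbove_iff]
  exact Iff.rfl

theorem isSupersol_iff (hF : ∀ z ∈ Q, ∀ q, Continuous fun p => F z p q) :
    IsSupersol Q F u ↔ ∀ ψ₁ ψ₂, IsC1UpperQ Q ψ₁ → IsCQ Q ψ₂ → ∀ z ∈ Q,
      TouchesBelow Q u (ψ₁ + ψ₂) z →
      ∃ s ∈ Icc (-uscEnvR Q (slopeT ψ₂) z) (uscEnvR Q (slopeT ψ₂) z),
        0 ≤ F z (slopeT ψ₁ z + s) (timeDeriv (ψ₁ + ψ₂) z) := by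
  refine forall₄_congr fun ψ₁ ψ₂ _ _ => forall₂_congr fun z hz => ?_
  rw [Fr_nonneg_iff (uscEnvR_slopeT_nonneg Q ψ₂ z) (hF z hz _), touchesBelow_iff]
  exact Iff.rfl

theorem isSubsol_neg_iff (hF : ∀ z ∈ Q, ∀ q, Continuous fun p => F z p q) :
    IsSubsol Q (fun z p q => -F z p (-q)) (-u) ↔ IsSupersol Q F u := by
  have hF' : ∀ z ∈ Q, ∀ q, Continuous fun p => -F z p (-q) := fun z hz q => (hF z hz (-q)).neg
  rw [isSubsol_iff hF', isSupersol_iff hF]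
  refine Iff.symm <| (Equiv.neg _).forall_congr fun {ψ₁} =>
    (Equiv.neg _).forall_congr fun {ψ₂} => ?_
  simp only [Equiv.neg_apply, isC1UnderQ_neg_iff, isCQ_neg_iff, ← neg_add, touchesAbove_neg_iff,
    slopeT_neg, timeDeriv_neg, Pi.neg_apply, neg_neg, neg_nonpos]

end Touching

section PerturbedTouching

theorem ofReal_le_toENNReal_coe_sub_iff {a : EReal} {b c : ℝ} (ha : a ≤ b) :
    ENNReal.ofReal c ≤ (b - a).toENNReal ↔ a ≤ ((b - c : ℝ) : EReal) := by
  induction a using EReal.rec with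
  | bot => simp
  | top => simp at ha
  | coe x =>
    have hx : 0 ≤ b - x := sub_nonneg.2 (EReal.coe_le_coe_iff.1 ha)
    rw [← EReal.coe_sub, EReal.toENNReal_of_ne_top (EReal.coe_ne_top _), EReal.toReal_coe,
      ENNReal.ofReal_le_ofReal_iff hx, EReal.coe_le_coe_iff, le_sub_comm]

theorem lowerSemicontinuousOn_toENNReal_coe_sub {α : Type*} [TopologicalSpace α] {s : Set α}
    {u : α → EReal} {g : α → ℝ} (hu : UpperSemicontinuousOn u s) (hg : ContinuousOn g s) :
    LowerSemicontinuousOn (fun z => (g z - u z).toENNReal) s := by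
  have hneg : LowerSemicontinuousOn (fun z => -u z) s :=
    continuous_neg.comp_upperSemicontinuousOn_antitone hu fun _ _ => EReal.neg_le_neg_iff.2
  have hcoe : LowerSemicontinuousOn (fun z => (g z : EReal)) s :=
    (continuous_coe_real_ereal.comp_continuousOn hg).lowerSemicontinuousOn
  refine EReal.continuous_toENNReal.comp_lowerSemicontinuousOn
    (hcoe.add' hneg fun z _ => ?_) fun _ _ => EReal.toENNReal_le_toENNReal
  exact EReal.continuousAt_add (Or.inl (EReal.coe_ne_top _)) (Or.inl (EReal.coe_ne_bot _))

theorem exists_forall_mem_prod_le_add_mul_dist_snd {T Y : Type*} [TopologicalSpace T]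
    [MetricSpace Y] {I : Set T} {B : Set Y} (hI : IsCompact I) (hB : IsComplete B)
    {u : T × Y → EReal} {g : T × Y → ℝ} (hu : UpperSemicontinuousOn u (I ×ˢ B))
    (hg : ContinuousOn g (I ×ˢ B)) (hug : ∀ z ∈ I ×ˢ B, u z ≤ g z) {ε : ℝ} (hε : 0 < ε)
    {z₀ : T × Y} (hz₀ : z₀ ∈ I ×ˢ B) {c₀ : ℝ} (hc₀ : ((g z₀ - c₀ : ℝ) : EReal) < u z₀) :
    ∃ z ∈ I ×ˢ B, ∃ c < c₀, u z = ((g z - c : ℝ) : EReal) ∧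
      ∀ w ∈ I ×ˢ B, u w ≤ ((g w + ε * dist w.2 z.2 - c : ℝ) : EReal) := by
  have hgap : ∀ w ∈ I ×ˢ B, ∀ c : ℝ,
      ENNReal.ofReal c ≤ (g w - u w).toENNReal ↔ u w ≤ ((g w - c : ℝ) : EReal) :=
    fun w hw _ => ofReal_le_toENNReal_coe_sub_iff (hug w hw)
  have hgap₀ : (g z₀ - u z₀).toENNReal < ENNReal.ofReal c₀ := by
    simpa only [not_le] using (hgap z₀ hz₀ c₀).not.2 hc₀.not_ge
  obtain ⟨z, hz, hzz₀, hzw⟩ := exists_forall_mem_prod_le_add_mul_edist_snd hI hB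
    (lowerSemicontinuousOn_toENNReal_coe_sub hu hg) (ENNReal.ofReal_pos.2 hε).ne'
    ENNReal.ofReal_ne_top hz₀ hgap₀.ne_top
  have hcz : ((g z - c₀ : ℝ) : EReal) < u z := by
    simpa only [not_le] using (hgap z hz c₀).not.1 (hzz₀.trans_lt hgap₀).not_ge
  obtain ⟨x, hx⟩ : ∃ x : ℝ, x = u z := CanLift.prf (u z)
    ⟨((hug z hz).trans_lt (EReal.coe_lt_top _)).ne, (bot_le.trans_lt hcz).ne'⟩
  have hxz : u z = ((g z - (g z - x) : ℝ) : EReal) := by rw [sub_sub_cancel, hx]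
  refine ⟨z, hz, g z - x, ?_, hxz, fun w hw => ?_⟩
  · rw [← hx, EReal.coe_lt_coe_iff] at hcz
    linarith
  rw [add_sub_right_comm, sub_add, ← hgap w hw, ENNReal.ofReal_sub _ (by positivity),
    tsub_le_iff_right]
  calc
    ENNReal.ofReal (g z - x) ≤ (g z - u z).toENNReal := (hgap z hz _).2 hxz.le
    _ ≤ (g w - u w).toENNReal + ENNReal.ofReal ε * edist z.2 w.2 := hzw w hw
    _ = (g w - u w).toENNReal + ENNReal.ofReal (ε * dist w.2 z.2) := by
      rw [edist_dist, dist_comm, ENNReal.ofReal_mul hε.le]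

variable {Q : Set (ℝ × X)} {ψ : ℝ × X → ℝ} {z₀ : ℝ × X} {ε : ℝ}

theorem exists_touchesAbove_add_quadPert [CompleteSpace X] {v : ℝ × X → EReal} {r : ℝ}
    (hr : 0 ≤ r) (hψ : ContinuousOn ψ (closedBall z₀ r))
    (hvψ : ∀ w ∈ closedBall z₀ r, uscEnv Q v w ≤ ψ w) (hε : 0 < ε) {w₀ : ℝ × X}
    (hw₀ : w₀ ∈ closedBall z₀ r)
    (hlt : ((ψ w₀ + sqDist z₀ w₀ - r ^ 2 : ℝ) : EReal) < uscEnv Q v w₀) :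
    ∃ w ∈ ball z₀ r, ∃ c, TouchesAbove Q v (ψ + quadPert z₀ ε w.2 c) w := by
  have hcyl : closedBall z₀.1 r ×ˢ closedBall z₀.2 r = closedBall z₀ r :=
    closedBall_prod_same z₀.1 z₀.2 r
  have hvg : ∀ w ∈ closedBall z₀ r, uscEnv Q v w ≤ ((ψ w + sqDist z₀ w : ℝ) : EReal) :=
    fun w hw => (hvψ w hw).trans
      (EReal.coe_le_coe_iff.2 (le_add_of_nonneg_right (sqDist_nonneg z₀ w)))
  obtain ⟨w, hw, c, hc, hvw, hmax⟩ := exists_forall_mem_prod_le_add_mul_dist_snd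
    (isCompact_closedBall z₀.1 r) isClosed_closedBall.isComplete
    ((upperSemicontinuous_uscEnv Q v).upperSemicontinuousOn _)
    (hcyl ▸ hψ.add (continuous_sqDist z₀).continuousOn) (hcyl ▸ hvg) hε (hcyl ▸ hw₀) hlt
  rw [hcyl] at hw hmax
  have hwr : w ∈ ball z₀ r := by
    refine mem_ball_of_sqDist_lt hr ?_
    have hle : ψ w + sqDist z₀ w - c ≤ ψ w :=
      EReal.coe_le_coe_iff.1 (hvw.symm.trans_le (hvψ w hw))
    linarith
  refine ⟨w, hwr, -c, ?_, ?_⟩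
  · rw [hvw]
    simp [quadPert, sub_eq_add_neg, add_assoc]
  · filter_upwards [mem_nhdsWithin_of_mem_nhds (isOpen_ball.mem_nhds hwr)] with y hy
    simpa [quadPert, sub_eq_add_neg, add_assoc] using hmax y (ball_subset_closedBall hy)

theorem TouchesAbove.frequently_add_sqDist_sub_lt {u : ℝ × X → EReal} {r : ℝ}
    (h : TouchesAbove Q u ψ z₀) (hψ : ContinuousWithinAt ψ Q z₀) (hr : 0 < r) :
    ∃ᶠ w in 𝓝[Q] z₀, ((ψ w + sqDist z₀ w - r ^ 2 : ℝ) : EReal) < u w := by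
  obtain ⟨a, hψa, ha⟩ : ∃ a, ψ z₀ - r ^ 2 < a ∧ a < ψ z₀ :=
    exists_between (sub_lt_self _ (pow_pos hr 2))
  have hau : ∃ᶠ w in 𝓝[Q] z₀, (a : EReal) < u w :=
    frequently_lt_of_lt_limsup (h := (EReal.coe_lt_coe_iff.2 ha).trans_eq h.1.symm)
  have hcont : ContinuousWithinAt (fun w => ψ w + sqDist z₀ w - r ^ 2) Q z₀ :=
    (hψ.add (continuous_sqDist z₀).continuousWithinAt).sub_const _
  have hψa' : ∀ᶠ w in 𝓝[Q] z₀, ψ w + sqDist z₀ w - r ^ 2 < a :=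
    hcont.eventually_lt_const (by simpa [sqDist] using hψa)
  exact (hau.and_eventually hψa').mono fun w hw => (EReal.coe_lt_coe_iff.2 hw.2).trans hw.1

theorem frequently_touchesAbove_of_iSup [CompleteSpace X] {S : Set (ℝ × X → EReal)}
    (hQ : IsOpen Q) (hz₀ : z₀ ∈ Q) (hψ : ContinuousOn ψ Q)
    (h : TouchesAbove Q (fun z => ⨆ v ∈ S, v z) ψ z₀) (hε : 0 < ε) :
    ∃ᶠ w in 𝓝 z₀, ∃ v ∈ S, ∃ c, TouchesAbove Q v (ψ + quadPert z₀ ε w.2 c) w := by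
  refine frequently_iff.2 fun {U} hU => ?_
  have hle := h.2
  rw [hQ.nhdsWithin_eq hz₀] at hle
  obtain ⟨r, hr, hball⟩ := nhds_basis_closedBall.mem_iff.1
    (inter_mem hU (inter_mem (hQ.mem_nhds hz₀) hle))
  obtain ⟨w₀, hlt, hw₀⟩ := ((h.frequently_add_sqDist_sub_lt (hψ z₀ hz₀) hr).and_eventually
    (mem_nhdsWithin_of_mem_nhds (closedBall_mem_nhds z₀ hr))).exists
  obtain ⟨v, hvS, hv⟩ := by simpa only [lt_iSup_iff, exists_prop] using hlt
  have hmono : uscEnv Q v ≤ uscEnv Q fun z => ⨆ v ∈ S, v z :=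
    uscEnv_mono fun z => le_iSup₂ (f := fun (v : ℝ × X → EReal) (_ : v ∈ S) => v z) v hvS
  obtain ⟨w, hw, c, hwc⟩ := exists_touchesAbove_add_quadPert hr.le
    (hψ.mono fun w hw => (hball hw).2.1) (fun w hw => (hmono w).trans (hball hw).2.2) hε hw₀
    (hv.trans_le (le_uscEnv v (hball hw₀).2.1))
  exact ⟨w, (hball (ball_subset_closedBall hw)).1, v, hvS, c, hwc⟩

end PerturbedTouching

section Stability

variable {Q : Set (ℝ × X)} {F : (ℝ × X) → ℝ → ℝ → ℝ}

theorem continuous_slice_of_continuousOn_prod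
    (hF : ContinuousOn (fun w : (ℝ × X) × ℝ × ℝ => F w.1 w.2.1 w.2.2) (Q ×ˢ (univ ×ˢ univ)))
    {z : ℝ × X} (hz : z ∈ Q) (q : ℝ) : Continuous fun p => F z p q :=
  hF.comp_continuous (f := fun p => (z, p, q)) (by fun_prop) fun _ => ⟨hz, trivial, trivial⟩

theorem exists_pos_eventually_forall_mem_Icc_pos (hQ : IsOpen Q)
    (hF : ContinuousOn (fun w : (ℝ × X) × ℝ × ℝ => F w.1 w.2.1 w.2.2) (Q ×ˢ (univ ×ˢ univ)))
    {p q : ℝ × X → ℝ} {z₀ : ℝ × X} (hp : ContinuousOn p Q) (hq : ContinuousOn q Q) (hz₀ : z₀ ∈ Q)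
    {M : ℝ} (hM : 0 ≤ M) (hpos : ∀ s ∈ Icc (-M) M, 0 < F z₀ (p z₀ + s) (q z₀)) :
    ∃ ε > 0, ∀ᶠ w in 𝓝 z₀, ∀ s ∈ Icc (-(M + 4 * ε)) (M + 4 * ε),
      0 < F w (p w + s) (q w + 2 * (w.1 - z₀.1)) := by
  have hG : ∀ s ∈ Icc (-M) M, ContinuousAt
      (fun a : (ℝ × X) × ℝ => F a.1 (p a.1 + a.2) (q a.1 + 2 * (a.1.1 - z₀.1))) (z₀, s) := by
    intro s _
    have hpz : ContinuousAt p z₀ := hp.continuousAt (hQ.mem_nhds hz₀)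
    have hqz : ContinuousAt q z₀ := hq.continuousAt (hQ.mem_nhds hz₀)
    have hFz := hF.continuousAt (x := (z₀, p z₀ + s, q z₀ + 2 * (z₀.1 - z₀.1)))
      ((hQ.prod (isOpen_univ.prod isOpen_univ)).mem_nhds ⟨hz₀, trivial, trivial⟩)
    exact hFz.comp (x := (z₀, s)) (f := fun a : (ℝ × X) × ℝ =>
      (a.1, p a.1 + a.2, q a.1 + 2 * (a.1.1 - z₀.1))) (by fun_prop)
  obtain ⟨r, hr, h⟩ := exists_gt_eventually_forall_mem_Icc_pos hM hG (by simpa using hpos)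
  refine ⟨(r - M) / 4, by linarith, ?_⟩
  rwa [mul_div_cancel₀ _ four_ne_zero, add_sub_cancel]

theorem isSubsol_iSup [CompleteSpace X] (hQ : IsOpen Q)
    (hF : ContinuousOn (fun w : (ℝ × X) × ℝ × ℝ => F w.1 w.2.1 w.2.2) (Q ×ˢ (univ ×ˢ univ)))
    {S : Set (ℝ × X → EReal)} (hS : ∀ v ∈ S, IsSubsol Q F v) :
    IsSubsol Q F fun z => ⨆ v ∈ S, v z := by
  have hFp : ∀ z ∈ Q, ∀ q, Continuous fun p => F z p q := fun z hz q =>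
    continuous_slice_of_continuousOn_prod hF hz q
  refine (isSubsol_iff hFp).2 fun ψ₁ ψ₂ hψ₁ hψ₂ z₀ hz₀ htouch => ?_
  by_contra! hpos
  have hψ : IsCQ Q (ψ₁ + ψ₂) := hψ₁.1.add hψ₂
  obtain ⟨ε, hε, hFpos⟩ := exists_pos_eventually_forall_mem_Icc_pos hQ hF hψ₁.2.2 hψ.2.2 hz₀
    (uscEnvR_slopeT_nonneg Q ψ₂ z₀) hpos
  have hψ_cont : ContinuousOn (ψ₁ + ψ₂) Q := LocallyLipschitzOn.continuousOn hψ.1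
  obtain ⟨w, ⟨v, hv, c, hvw⟩, hFw, hslope, hwQ⟩ :=
    ((frequently_touchesAbove_of_iSup hQ hz₀ hψ_cont htouch hε).and_eventually
      (hFpos.and ((eventually_uscEnvR_slopeT_add_quadPert_le hQ hψ₂.1 hz₀ hε).and
        (hQ.eventually_mem hz₀)))).exists
  have hpert := isCQ_quadPert Q z₀ ε w.2 c
  rw [add_assoc] at hvw
  obtain ⟨s, hs, hle⟩ :=
    (isSubsol_iff hFp).1 (hS v hv) ψ₁ (ψ₂ + quadPert z₀ ε w.2 c) hψ₁ (hψ₂.add hpert) w hwQ hvw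
  rw [← add_assoc, hψ.timeDeriv_add hpert hwQ, timeDeriv_quadPert] at hle
  exact hle.not_gt (hFw s (Icc_subset_Icc (neg_le_neg (hslope w.2 c)) (hslope w.2 c) hs))

theorem isSupersol_iInf [CompleteSpace X] (hQ : IsOpen Q)
    (hF : ContinuousOn (fun w : (ℝ × X) × ℝ × ℝ => F w.1 w.2.1 w.2.2) (Q ×ˢ (univ ×ˢ univ)))
    {S : Set (ℝ × X → EReal)} (hS : ∀ v ∈ S, IsSupersol Q F v) :
    IsSupersol Q F fun z => ⨅ v ∈ S, v z := by
  have hFp : ∀ z ∈ Q, ∀ q, Continuous fun p => F z p q := fun z hz q =>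
    continuous_slice_of_continuousOn_prod hF hz q
  have hneg_cont : ContinuousOn
      (fun w : (ℝ × X) × ℝ × ℝ => -F w.1 w.2.1 (-w.2.2)) (Q ×ˢ (univ ×ˢ univ)) :=
    (hF.comp (f := fun w : (ℝ × X) × ℝ × ℝ => (w.1, w.2.1, -w.2.2)) (by fun_prop)
      fun w hw => ⟨hw.1, trivial, trivial⟩).neg
  have hneg : (-fun z => ⨅ v ∈ S, v z) = fun z => ⨆ v ∈ -S, v z := by
    funext z
    calc
      -⨅ v ∈ S, v z = ⨆ v ∈ S, -v z := EReal.negOrderIso.map_iInf₂ fun v (_ : v ∈ S) => v z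
      _ = ⨆ v ∈ -S, v z := by
        rw [← image_neg_eq_neg, iSup_image]
        rfl
  rw [← isSubsol_neg_iff hFp, hneg]
  refine isSubsol_iSup hQ hneg_cont fun v hv => ?_
  rw [← neg_neg v, isSubsol_neg_iff hFp]
  exact hS _ hv

end Stability

theorem stmt8_general [CompleteSpace X] (Q : Set (ℝ × X)) (hQ : IsOpen Q)
    (F : (ℝ × X) → ℝ → ℝ → ℝ)
    (hFc : ContinuousOn (fun w : (ℝ × X) × ℝ × ℝ => F w.1 w.2.1 w.2.2) (Q ×ˢ (univ ×ˢ univ)))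
    (S : Set ((ℝ × X) → EReal)) :
    ((∀ v ∈ S, IsSubsol Q F v) → IsSubsol Q F (fun z => ⨆ v ∈ S, v z)) ∧
    ((∀ v ∈ S, IsSupersol Q F v) → IsSupersol Q F (fun z => ⨅ v ∈ S, v z)) :=
  ⟨isSubsol_iSup hQ hFc, isSupersol_iInf hQ hFc⟩

/-- stability under extremum. -/
theorem stmt8 [CompleteSpace X] (hgeo : IsGeodesicSpace X)
    (Q : Set (ℝ × X)) (hQ : IsOpen Q)
    (F : (ℝ × X) → ℝ → ℝ → ℝ)
    (hFc : ContinuousOn (fun w : (ℝ × X) × ℝ × ℝ => F w.1 w.2.1 w.2.2)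
      (Q ×ˢ ((Set.univ : Set ℝ) ×ˢ (Set.univ : Set ℝ))))
    (hFe : ∀ z p q, F z (-p) q = F z p q)
    (hFconv : ∀ z q, ConvexOn ℝ Set.univ fun p => F z p q)
    (S : Set ((ℝ × X) → EReal)) :
    ((∀ v ∈ S, IsSubsol Q F v) → IsSubsol Q F (fun z => ⨆ v ∈ S, v z)) ∧
    ((∀ v ∈ S, IsSupersol Q F v) → IsSupersol Q F (fun z => ⨅ v ∈ S, v z)) := by
  exact stmt8_general Q hQ F hFc S
end
end

section
/- (Uniqueness of the critical value.) Let (X,d) be a compact geodesic metric space and let H:X×ℝ→ℝ satisfy H(x,p)=H(x,|p|), (A1) and (A2). If c ∈ ℝ is a constant such that the stationary equation H(x,|Dv|) = c admits a real-valued continuous metric viscosity solution on X, then c = max_{x∈X} H(x,0); in particular one has the two inequalities sup_{x∈X} inf_{p≥0} H(x,p) ≤ c ≤ sup_{x∈X} H(x,0). -/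
open Filter Metric Set Topology

noncomputable section

variable {X : Type*} [MetricSpace X]

/-!
At a minimum point of `v`, a constant is an admissible test function from below, so the
supersolution property gives `c ≤ H x₀ 0`. For the reverse inequality at `x`, subtract from `v` a
steep cone `k * dist · x`: the difference has a local maximum at some `y` near `x`. Testing with
`ψ₁` constant and `ψ₂` equal to the cone up to a constant, the subsolution property says that the
infimum of `H y` over an interval is at most `c`. As `H y` is minimal at `0`, this gives
`H y 0 ≤ c`, and semicontinuity carries the bound from the points `y` to `x`.
-/

theorem map_zero_le_of_convexOn_of_even {𝕜 E : Type*} [Field 𝕜] [LinearOrder 𝕜]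
    [IsStrictOrderedRing 𝕜] [AddCommGroup E] [Module 𝕜 E] {s : Set E} {f : E → 𝕜}
    (hf : ConvexOn 𝕜 s f) (heven : f.Even) {x : E} (hx : x ∈ s) (hneg : -x ∈ s) : f 0 ≤ f x := by
  have hhalf : (2⁻¹ : 𝕜) + 2⁻¹ = 1 := by norm_num
  have hmid := hf.2 hx hneg (inv_nonneg.2 zero_le_two) (inv_nonneg.2 zero_le_two) hhalf
  rwa [smul_neg, add_neg_cancel, heven x, Convex.combo_self hhalf] at hmid

-- No boundedness of `f` is needed because `sInf ∅ = sInf univ = 0` in `ℝ`.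
theorem limsup_nonneg_of_forall_nonneg {α : Type*} {F : Filter α} {f : α → ℝ}
    (hf : ∀ a, 0 ≤ f a) : 0 ≤ limsup f F := by
  rcases eq_or_neBot F with rfl | _
  · simp [limsup, limsSup]
  · refine Real.sInf_nonneg fun b hb => ?_
    obtain ⟨a, hab⟩ := (eventually_map.1 hb).exists
    exact (hf a).trans hab

theorem exists_isLocalMax_sub_mul_dist {α : Type*} [PseudoMetricSpace α] [LocallyCompactSpace α]
    {f : α → ℝ} {s : Set α} {x : α} (hs : s ∈ 𝓝 x) (hf : UpperSemicontinuousOn f s) :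
    ∃ y ∈ s, ∃ k : ℝ, IsLocalMax (fun w => f w - k * dist w x) y := by
  obtain ⟨t, htx, hts, ht⟩ := local_compact_nhds hs
  obtain ⟨δ, hδ, hball⟩ := Metric.mem_nhds_iff.1 htx
  have hxt : x ∈ t := mem_of_mem_nhds htx
  have hft : UpperSemicontinuousOn f t := hf.mono hts
  obtain ⟨z, -, hz⟩ := hft.exists_isMaxOn ⟨x, hxt⟩ ht
  -- With this slope, `f w - k * dist w x < f x` for all `w ∈ t` with `δ ≤ dist w x`.
  obtain ⟨k, hkδ⟩ : ∃ k : ℝ, k * δ = f z - f x + 1 := ⟨_, div_mul_cancel₀ _ hδ.ne'⟩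
  have hk : 0 ≤ k := nonneg_of_mul_nonneg_left (by linarith [isMaxOn_iff.1 hz x hxt]) hδ
  have hcone : Continuous fun w => -(k * dist w x) := by fun_prop
  obtain ⟨y, hyt, hy⟩ :=
    (hft.add (hcone.upperSemicontinuous.upperSemicontinuousOn t)).exists_isMaxOn ⟨x, hxt⟩ ht
  simp only [← sub_eq_add_neg] at hy
  have hyδ : dist y x < δ := by
    have hxy : f x ≤ f y - k * dist y x := by simpa using isMaxOn_iff.1 hy x hxt
    exact lt_of_mul_lt_mul_left (by linarith [isMaxOn_iff.1 hz y hyt]) hk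
  exact ⟨y, hts hyt, k, hy.isLocalMax (mem_of_superset (isOpen_ball.mem_nhds hyδ) hball)⟩

section Envelope

variable {α : Type*} [TopologicalSpace α] {s : Set α} {v : α → ℝ} {x : α}

theorem uscEnv_coe_eq (hv : UpperSemicontinuousWithinAt v s x) (hx : x ∈ s) :
    uscEnv s (fun y => (v y : EReal)) x = v x := by
  refine le_antisymm ?_ (le_limsup_of_frequently_le ?_)
  · exact (continuous_coe_real_ereal.continuousAt.comp_upperSemicontinuousWithinAt hv
      EReal.coe_strictMono.monotone).limsup_le
  · exact frequently_iff.2 fun ht => ⟨x, mem_of_mem_nhdsWithin hx ht, le_rfl⟩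

theorem lscEnv_coe_eq (hv : LowerSemicontinuousWithinAt v s x) (hx : x ∈ s) :
    lscEnv s (fun y => (v y : EReal)) x = v x := by
  refine le_antisymm (liminf_le_of_frequently_le ?_) ?_
  · exact frequently_iff.2 fun ht => ⟨x, mem_of_mem_nhdsWithin hx ht, le_rfl⟩
  · exact (continuous_coe_real_ereal.continuousAt.comp_lowerSemicontinuousWithinAt hv
      EReal.coe_strictMono.monotone).le_liminf

end Envelope

section TestFunctions

theorem locLipOn_of_lipschitzWith {α : Type*} [PseudoMetricSpace α] {K : NNReal} {f : α → ℝ}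
    (hf : LipschitzWith K f) (s : Set α) : LocLipOn s f :=
  fun _ _ => ⟨K, univ, univ_mem, hf.lipschitzOnWith⟩

theorem isCU_const (U : Set X) (a : ℝ) : IsCU U fun _ => a :=
  locLipOn_of_lipschitzWith (LipschitzWith.const a) U

theorem isCU_mul_dist (U : Set X) (k : ℝ) (x : X) : IsCU U fun w => k * dist w x :=
  locLipOn_of_lipschitzWith ((lipschitzWith_smul k).comp (LipschitzWith.dist_left x)) U

theorem mslope_nonneg (f : X → ℝ) (x : X) : 0 ≤ mslope f x :=
  limsup_nonneg_of_forall_nonneg fun _ => by positivity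

theorem mslope_const (a : ℝ) (x : X) : mslope (fun _ => a) x = 0 := by
  rcases eq_or_neBot (𝓝[≠] x) with h | _
  · simp [mslope, h, limsup, limsSup]
  · simp [mslope]

theorem isC1UnderU_const (U : Set X) (a : ℝ) : IsC1UnderU U fun _ => a := by
  refine ⟨isCU_const U a, fun x _ => by simp [mslope, mslopeDown], ?_⟩
  simpa only [funext (mslope_const a)] using continuousOn_const

theorem isC1UpperU_const (U : Set X) (a : ℝ) : IsC1UpperU U fun _ => a := by
  refine ⟨isCU_const U a, fun x _ => by simp [mslope, mslopeUp], ?_⟩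
  simpa only [funext (mslope_const a)] using continuousOn_const

theorem uscEnvR_mslope_nonneg (U : Set X) (f : X → ℝ) (x : X) : 0 ≤ uscEnvR U (mslope f) x :=
  limsup_nonneg_of_forall_nonneg (mslope_nonneg f)

theorem uscEnvR_mslope_const {U : Set X} {x : X} (hx : x ∈ U) (a : ℝ) :
    uscEnvR U (mslope fun _ => a) x = 0 := by
  have : (𝓝[U] x).NeBot := nhdsWithin_neBot_of_mem hx
  simp [uscEnvR, funext (mslope_const a)]

end TestFunctions

section Hamiltonian

variable {Y : Type*} {G : Y → ℝ → ℝ} {x : Y}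

theorem Hr_zero (G : Y → ℝ → ℝ) (x : Y) (p : ℝ) : Hr G 0 x p = G x p := by
  have hne : (Icc (-1 : ℝ) 1).Nonempty := ⟨0, by norm_num⟩
  simp [Hr, hne.image_const]

theorem le_Hr_of_nonpos {r m : ℝ} (hr : r ≤ 0) (hm : ∀ p, m ≤ G x p) (p : ℝ) :
    m ≤ Hr G r x p := by
  rcases hr.eq_or_lt with rfl | hr
  · exact (hm p).trans_eq (Hr_zero G x p).symm
  · rw [Hr, if_neg hr.not_ge]
    refine le_csInf (Set.Nonempty.image _ ⟨0, by norm_num⟩) ?_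
    rintro _ ⟨q, -, rfl⟩
    exact hm _

end Hamiltonian

section Touching

variable {U : Set X} {G : X → ℝ → ℝ} {v : X → ℝ}

theorem IsSupersolS.nonneg_of_isLocalMinOn (hsol : IsSupersolS U G fun x => (v x : EReal))
    (hv : LowerSemicontinuousOn v U) {x : X} (hx : x ∈ U) (hmin : IsLocalMinOn v U x) :
    0 ≤ G x 0 := by
  obtain ⟨R, hR, hball⟩ := Metric.mem_nhdsWithin_iff.1 hmin
  have htest := hsol (fun _ => v x) (fun _ => 0) (isC1UpperU_const U _) (isCU_const U 0) x hx
    ⟨R, hR, by rw [lscEnv_coe_eq (hv x hx) hx, add_zero], fun w hw => by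
      rw [lscEnv_coe_eq (hv w hw.2) hw.2, add_zero]
      exact EReal.coe_le_coe_iff.2 (hball hw)⟩
  rwa [uscEnvR_mslope_const hx, mslope_const, Hr_zero] at htest

theorem IsSubsolS.nonpos_of_isLocalMaxOn_sub (hsol : IsSubsolS U G fun x => (v x : EReal))
    (hv : UpperSemicontinuousOn v U) {φ : X → ℝ} (hφ : IsCU U φ) {y : X} (hy : y ∈ U)
    (hmax : IsLocalMaxOn (fun w => v w - φ w) U y) {m : ℝ} (hm : ∀ p, m ≤ G y p) : m ≤ 0 := by
  obtain ⟨R, hR, hball⟩ := Metric.mem_nhdsWithin_iff.1 hmax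
  have htest := hsol (fun _ => v y - φ y) φ (isC1UnderU_const U _) hφ y hy
    ⟨R, hR, by rw [uscEnv_coe_eq (hv y hy) hy, sub_add_cancel], fun w hw => by
      rw [uscEnv_coe_eq (hv w hw.2) hw.2]
      exact EReal.coe_le_coe_iff.2 (sub_le_iff_le_add.1 (hball hw))⟩
  exact (le_Hr_of_nonpos (neg_nonpos.2 (uscEnvR_mslope_nonneg U φ y)) hm _).trans htest

theorem IsSubsolS.nonpos_of_forall_le [LocallyCompactSpace X]
    (hsol : IsSubsolS U G fun x => (v x : EReal)) (hU : IsOpen U) (hv : UpperSemicontinuousOn v U)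
    {m : X → ℝ} (hm : LowerSemicontinuousOn m U) (hmG : ∀ x ∈ U, ∀ p, m x ≤ G x p)
    {x : X} (hx : x ∈ U) : m x ≤ 0 := by
  by_contra! hpos
  have hnhds : U ∩ {w | 0 < m w} ∈ 𝓝 x :=
    inter_mem (hU.mem_nhds hx) (hU.nhdsWithin_eq hx ▸ hm x hx 0 hpos)
  obtain ⟨y, ⟨hyU, hy⟩, k, hmax⟩ :=
    exists_isLocalMax_sub_mul_dist hnhds (hv.mono inter_subset_left)
  exact hy.not_ge (hsol.nonpos_of_isLocalMaxOn_sub hv (isCU_mul_dist U k x) hyU (hmax.on U)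
    (hmG y hyU))

end Touching

theorem stmt10_general [CompactSpace X] [Nonempty X] {H : X → ℝ → ℝ}
    (hH₀ : LowerSemicontinuous fun x => H x 0) (hmin : ∀ x p, H x 0 ≤ H x p)
    {c : ℝ} {v : X → ℝ} (hv : Continuous v)
    (hsol : IsSolS (Set.univ : Set X) (fun x p => H x p - c) (fun x => ((v x : ℝ) : EReal))) :
    IsGreatest (Set.range fun x => H x 0) c ∧
    (⨆ x : X, ⨅ p : Set.Ici (0:ℝ), ((H x p : ℝ) : EReal)) ≤ (c : EReal) ∧
    (c : EReal) ≤ ⨆ x : X, ((H x 0 : ℝ) : EReal) := by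
  have hle (x : X) : H x 0 ≤ c := by
    have hm : LowerSemicontinuous fun x => H x 0 - c := hH₀.add lowerSemicontinuous_const
    exact sub_nonpos.1 <| hsol.1.nonpos_of_forall_le isOpen_univ
      (hv.upperSemicontinuous.upperSemicontinuousOn univ) (hm.lowerSemicontinuousOn univ)
      (fun y _ p => sub_le_sub_right (hmin y p) c) (mem_univ x)
  obtain ⟨x₀, -, hx₀⟩ := isCompact_univ.exists_isMinOn univ_nonempty hv.continuousOn
  have hge : c ≤ H x₀ 0 := sub_nonneg.1 <| hsol.2.nonneg_of_isLocalMinOn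
    (hv.lowerSemicontinuous.lowerSemicontinuousOn univ) (mem_univ x₀) hx₀.localize
  refine ⟨⟨⟨x₀, (hle x₀).antisymm hge⟩, forall_mem_range.2 hle⟩, iSup_le fun x => ?_, ?_⟩
  · exact (iInf_le _ ⟨0, self_mem_Ici⟩).trans (EReal.coe_le_coe_iff.2 (hle x))
  · exact le_iSup_of_le x₀ (EReal.coe_le_coe_iff.2 hge)

/-- uniqueness of the critical value. -/
theorem stmt10 [CompactSpace X] [Nonempty X] (hgeo : IsGeodesicSpace X)
    (H : X → ℝ → ℝ)
    (heven : ∀ x p, H x p = H x |p|)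
    (hA1 : Continuous fun w : X × ℝ => H w.1 w.2)
    (hA2 : ∀ x, ConvexOn ℝ Set.univ (H x))
    (c : ℝ) (v : X → ℝ) (hv : Continuous v)
    (hsol : IsSolS (Set.univ : Set X) (fun x p => H x p - c) (fun x => ((v x : ℝ) : EReal))) :
    IsGreatest (Set.range fun x => H x 0) c ∧
    (⨆ x : X, ⨅ p : Set.Ici (0:ℝ), ((H x p : ℝ) : EReal)) ≤ (c : EReal) ∧
    (c : EReal) ≤ ⨆ x : X, ((H x 0 : ℝ) : EReal) :=
  stmt10_general (hA1.comp (Continuous.prodMk_left (0 : ℝ))).lowerSemicontinuous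
    (fun x p => map_zero_le_of_convexOn_of_even (hA2 x)
      (fun q => by rw [heven, abs_neg, ← heven]) (mem_univ p) (mem_univ (-p)))
    hv hsol
end
end
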